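/- Let μ be the Lie bracket on ℝ^7 with nonzero basis brackets [e1,e2]=e3, [e1,e3]=e4, [e1,e5]=e6, [e2,e3]=e5, [e2,e4]=e6, [e2,e5]=e7, [e2,e6]=e7, [e3,e5]=-e7. Then φ = (1/2)·diag(0,1,1,1,2,2,3) is a derivation of (ℝ^7,μ) and φ is pre-Einstein, i.e. trace(φ∘ψ) = trace(ψ) for every derivation ψ of (ℝ^7,μ). -/

import Mathlib

open Finset

noncomputable section

/-- `ℝ⁷` with its standard basis and standard inner product. -/
abbrev V7 : Type := Fin 7 → ℝ

/-- The standard basis vector `e i`. -/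
def e (i : Fin 7) : V7 := Pi.single i 1

/-- The standard inner product on `ℝ⁷`. -/
def dot (x y : V7) : ℝ := ∑ i, x i * y i

/-- Structure constants built from a list of entries `(i, j, k, a)`, each meaning that
`μ (e i) (e j)` has component `a` along `e k` (and `μ (e j) (e i)` has component `-a`);
all unlisted basis brackets are `0`. -/
def toC (L : List (Fin 7 × Fin 7 × Fin 7 × ℝ)) (i j k : Fin 7) : ℝ :=
  (L.map fun t =>
      (if t.1 = i ∧ t.2.1 = j ∧ t.2.2.1 = k then t.2.2.2 else 0)
    - (if t.1 = j ∧ t.2.1 = i ∧ t.2.2.1 = k then t.2.2.2 else 0)).sum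

/-- The bilinear skew-symmetric map on `ℝ⁷` with structure constants `c`. -/
def br (c : Fin 7 → Fin 7 → Fin 7 → ℝ) (x y : V7) : V7 :=
  fun k => ∑ i, ∑ j, x i * y j * c i j k

lemma br_add_left (c : Fin 7 → Fin 7 → Fin 7 → ℝ) (x x' y : V7) :
    br c (x + x') y = br c x y + br c x' y := by
  funext k
  simp only [br, Pi.add_apply, ← Finset.sum_add_distrib]
  exact Finset.sum_congr rfl fun i _ => Finset.sum_congr rfl fun j _ => by ring

lemma br_smul_left (c : Fin 7 → Fin 7 → Fin 7 → ℝ) (r : ℝ) (x y : V7) :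
    br c (r • x) y = r • br c x y := by
  funext k
  simp only [br, Pi.smul_apply, smul_eq_mul, Finset.mul_sum]
  exact Finset.sum_congr rfl fun i _ => Finset.sum_congr rfl fun j _ => by ring

lemma br_add_right (c : Fin 7 → Fin 7 → Fin 7 → ℝ) (x y y' : V7) :
    br c x (y + y') = br c x y + br c x y' := by
  funext k
  simp only [br, Pi.add_apply, ← Finset.sum_add_distrib]
  exact Finset.sum_congr rfl fun i _ => Finset.sum_congr rfl fun j _ => by ring

lemma br_smul_right (c : Fin 7 → Fin 7 → Fin 7 → ℝ) (r : ℝ) (x y : V7) :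
    br c x (r • y) = r • br c x y := by
  funext k
  simp only [br, Pi.smul_apply, smul_eq_mul, Finset.mul_sum]
  exact Finset.sum_congr rfl fun i _ => Finset.sum_congr rfl fun j _ => by ring

lemma br_zero_left (c : Fin 7 → Fin 7 → Fin 7 → ℝ) (y : V7) : br c 0 y = 0 := by
  funext k; simp [br]

lemma br_zero_right (c : Fin 7 → Fin 7 → Fin 7 → ℝ) (x : V7) : br c x 0 = 0 := by
  funext k; simp [br]

/-- The space of derivations of the algebra `(ℝ⁷, br c)`, i.e. the linear maps `D` with
`D (μ x y) = μ (D x) y + μ x (D y)` for all `x, y`, as a submodule of the endomorphisms. -/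
def derivations (c : Fin 7 → Fin 7 → Fin 7 → ℝ) : Submodule ℝ (Module.End ℝ V7) where
  carrier := {D | ∀ x y, D (br c x y) = br c (D x) y + br c x (D y)}
  add_mem' := by
    intro D E hD hE x y
    simp only [LinearMap.add_apply, hD x y, hE x y, br_add_left, br_add_right]
    abel
  zero_mem' := by
    intro x y
    simp [br_zero_left, br_zero_right]
  smul_mem' := by
    intro r D hD x y
    simp only [LinearMap.smul_apply, hD x y, smul_add, br_smul_left, br_smul_right]

/-- The Jacobi identity for the bracket `br c`. -/
def Jacobi (c : Fin 7 → Fin 7 → Fin 7 → ℝ) : Prop :=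
  ∀ x y z : V7, br c (br c x y) z + br c (br c y z) x + br c (br c z x) y = 0

/-- Skew-symmetry of the bracket `br c`. -/
def Skew (c : Fin 7 → Fin 7 → Fin 7 → ℝ) : Prop :=
  ∀ x y : V7, br c x y = - br c y x

/-- The diagonal endomorphism `diag (a 1, …, a 7)` of `ℝ⁷`, `e i ↦ a i • e i`. -/
def diagL (a : Fin 7 → ℝ) : Module.End ℝ V7 :=
  LinearMap.pi fun i => a i • LinearMap.proj i

/-- Structure constants of the bracket with nonzero basis brackets
`[e1,e2]=e3, [e1,e3]=e4, [e1,e5]=e6, [e2,e3]=e5, [e2,e4]=e6, [e2,e5]=e7, [e2,e6]=e7,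
[e3,e5]=-e7`. -/
def c4 : Fin 7 → Fin 7 → Fin 7 → ℝ :=
  toC [(0, 1, 2, (1:ℝ)),
   (0, 2, 3, 1),
   (0, 4, 5, 1),
   (1, 2, 4, 1),
   (1, 3, 5, 1),
   (1, 4, 6, 1),
   (1, 5, 6, 1),
   (2, 4, 6, -1)]

lemma br4 (x y : V7) : br c4 x y = ![0, 0, x 0 * y 1 - x 1 * y 0, x 0 * y 2 - x 2 * y 0,
    x 1 * y 2 - x 2 * y 1, x 0 * y 4 - x 4 * y 0 + x 1 * y 3 - x 3 * y 1,
    x 1 * y 4 - x 4 * y 1 + x 1 * y 5 - x 5 * y 1 - x 2 * y 4 + x 4 * y 2] := by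
  funext k
  fin_cases k <;> simp [br, c4, toC, Fin.sum_univ_succ] <;> ring

lemma b01 : br c4 (e 0) (e 1) = e 2 := by
  rw [br4]
  funext k
  fin_cases k <;> simp [e, Pi.single_apply]

lemma b02 : br c4 (e 0) (e 2) = e 3 := by
  rw [br4]
  funext k
  fin_cases k <;> simp [e, Pi.single_apply]

lemma b04 : br c4 (e 0) (e 4) = e 5 := by
  rw [br4]
  funext k
  fin_cases k <;> simp [e, Pi.single_apply]

lemma b12 : br c4 (e 1) (e 2) = e 4 := by
  rw [br4]
  funext k
  fin_cases k <;> simp [e, Pi.single_apply]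

lemma b14 : br c4 (e 1) (e 4) = e 6 := by
  rw [br4]
  funext k
  fin_cases k <;> simp [e, Pi.single_apply]

lemma b15 : br c4 (e 1) (e 5) = e 6 := by
  rw [br4]
  funext k
  fin_cases k <;> simp [e, Pi.single_apply]

/-- The bracket satisfies the Jacobi identity (and is skew-symmetric), `φ` is a derivation
of it, and `φ` is pre-Einstein: `trace (φ ∘ ψ) = trace ψ` for every derivation `ψ`. -/
theorem stmt :
    Skew c4 ∧ Jacobi c4 ∧
    ((1/2 : ℝ) • diagL ![0, 1, 1, 1, 2, 2, 3]) ∈ derivations c4 ∧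
    ∀ ψ ∈ derivations c4,
      LinearMap.trace ℝ V7 (((1/2 : ℝ) • diagL ![0, 1, 1, 1, 2, 2, 3]) ∘ₗ ψ) = LinearMap.trace ℝ V7 ψ := by
  refine ⟨?_, ?_, ?_, ?_⟩
  · intro x y
    rw [br4, br4]
    funext k
    fin_cases k <;> simp <;> ring
  · intro x y z
    simp only [br4]
    funext k
    fin_cases k <;> simp <;> ring
  · intro x y
    simp only [br4]
    funext k
    fin_cases k <;> simp [diagL] <;> ring
  · intro ψ hψ
    have h012 := congrFun (hψ (e 0) (e 1)) 2
    have h013 := congrFun (hψ (e 0) (e 1)) 3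
    have h023 := congrFun (hψ (e 0) (e 2)) 3
    have h044 := congrFun (hψ (e 0) (e 4)) 4
    have h045 := congrFun (hψ (e 0) (e 4)) 5
    have h124 := congrFun (hψ (e 1) (e 2)) 4
    have h125 := congrFun (hψ (e 1) (e 2)) 5
    have h146 := congrFun (hψ (e 1) (e 4)) 6
    have h156 := congrFun (hψ (e 1) (e 5)) 6
    rw [b01] at h012 h013
    rw [b02] at h023
    rw [b04] at h044 h045
    rw [b12] at h124 h125
    rw [b14] at h146
    rw [b15] at h156
    simp [br4, e] at h012 h013 h023 h044 h045 h124 h125 h146 h156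
    rw [LinearMap.trace_eq_matrix_trace ℝ (Pi.basisFun ℝ (Fin 7)),
      LinearMap.trace_eq_matrix_trace ℝ (Pi.basisFun ℝ (Fin 7))]
    simp [Matrix.trace, LinearMap.toMatrix_apply, Fin.sum_univ_succ, diagL]
    linear_combination (-1/2)*h012 + (-3/2)*h013 + (-1/2)*h023 + (2)*h044 + (2)*h045 + (1/2)*h124 + (-3/2)*h125 + (-3/2)*h146 + (2)*h156
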